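/- For every integer n ≥ 2, the topological n-th homotopy group π_n^top(ℋ_n, 0) of the n-dimensional Hawaiian earring is metrizable. -/

import Mathlib

open scoped Topology Topology.Homotopy unitInterval

noncomputable section

/-- The quotient topology on the `N`-th homotopy group, induced from the compact-open
topology on the space of generalized loops. -/
instance homotopyGroupTopology (N X : Type*) [TopologicalSpace X] (x : X) :
    TopologicalSpace (HomotopyGroup N X x) :=
  inferInstanceAs (TopologicalSpace (Quotient (GenLoop.Homotopic.setoid N x)))

/-- The `n`-sphere of radius `1/j` centered at `(1/j, 0, …, 0)` in `ℝ^{n+1}`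
(it passes through the origin). -/
def hawSphere (n j : ℕ) : Set (EuclideanSpace ℝ (Fin (n+1))) :=
  Metric.sphere (EuclideanSpace.single (0 : Fin (n+1)) ((1 : ℝ)/j)) (1/j)

/-- The `n`-dimensional Hawaiian earring: the union of the spheres `hawSphere n j`, `j ≥ 1`. -/
def hawaiian (n : ℕ) : Set (EuclideanSpace ℝ (Fin (n+1))) :=
  ⋃ j ∈ {j : ℕ | 1 ≤ j}, hawSphere n j

/-- The union `Y_i^{(n)}` of the first `i` spheres of the `n`-dimensional Hawaiian earring. -/
def Ysub (n i : ℕ) : Set (EuclideanSpace ℝ (Fin (n+1))) :=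
  ⋃ j ∈ Finset.Icc 1 i, hawSphere n j

lemma zero_mem_hawSphere (n j : ℕ) : (0 : EuclideanSpace ℝ (Fin (n+1))) ∈ hawSphere n j := by
  have : dist (0 : EuclideanSpace ℝ (Fin (n+1)))
      (EuclideanSpace.single (0 : Fin (n+1)) ((1 : ℝ)/j)) = 1/j := by
    rw [dist_zero_left, EuclideanSpace.norm_single, Real.norm_eq_abs,
      abs_of_nonneg (one_div_nonneg.mpr (Nat.cast_nonneg j))]
  exact Metric.mem_sphere.mpr this

lemma zero_mem_hawaiian (n : ℕ) : (0 : EuclideanSpace ℝ (Fin (n+1))) ∈ hawaiian n :=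
  Set.mem_biUnion (by simp : (1 : ℕ) ∈ {j : ℕ | 1 ≤ j}) (zero_mem_hawSphere n 1)

lemma zero_mem_Ysub (n i : ℕ) : (0 : EuclideanSpace ℝ (Fin (n+1))) ∈ Ysub n (i+1) :=
  Set.mem_biUnion (by simp : (1 : ℕ) ∈ Finset.Icc 1 (i+1)) (zero_mem_hawSphere n 1)

/-- The basepoint (the origin) of the Hawaiian earring. -/
def hawaiianPt (n : ℕ) : ↥(hawaiian n) := ⟨0, zero_mem_hawaiian n⟩

/-- The basepoint (the origin) of `Y_{i+1}^{(n)}`. -/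
def YsubPt (n i : ℕ) : ↥(Ysub n (i+1)) := ⟨0, zero_mem_Ysub n i⟩

/-! ### Part A: generalities on homotopy groups -/

open GenLoop

section PartA

variable {N X Y : Type*} [TopologicalSpace X] [TopologicalSpace Y] {x : X} {y : Y}

/-- The class of a generalized loop. -/
def hcls (f : Ω^ N X x) : HomotopyGroup N X x :=
  Quotient.mk (GenLoop.Homotopic.setoid N x) f

lemma hcls_surj (a : HomotopyGroup N X x) : ∃ f : Ω^ N X x, hcls f = a :=
  Quotient.exists_rep a

lemma hcls_eq_iff {f g : Ω^ N X x} : hcls f = hcls g ↔ GenLoop.Homotopic f g :=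
  Quotient.eq (r := GenLoop.Homotopic.setoid N x)

lemma hcls_eq_of {f g : Ω^ N X x} (F : I × (I^N) → X) (hF : Continuous F)
    (h0 : ∀ t, F (0, t) = f t) (h1 : ∀ t, F (1, t) = g t)
    (hb : ∀ s, ∀ t ∈ Cube.boundary N, F (s, t) = x) : hcls f = hcls g := by
  rw [hcls_eq_iff]
  refine ⟨⟨⟨⟨F, hF⟩, h0, h1⟩, ?_⟩⟩
  intro s t ht
  exact (hb s t ht).trans (f.2 t ht).symm

lemma exists_of_hcls_eq {f g : Ω^ N X x} (h : hcls f = hcls g) :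
    ∃ F : I × (I^N) → X, Continuous F ∧ (∀ t, F (0, t) = f t) ∧ (∀ t, F (1, t) = g t) ∧
      (∀ s, ∀ t ∈ Cube.boundary N, F (s, t) = x) := by
  rw [hcls_eq_iff] at h
  obtain ⟨H⟩ := h
  refine ⟨H, H.continuous, H.apply_zero, H.apply_one, ?_⟩
  intro s t ht
  exact (H.eq_fst s ht).trans (f.2 t ht)

/-- Push forward of generalized loops. -/
def glMap (φ : C(X, Y)) (hφ : φ x = y) (f : Ω^ N X x) : Ω^ N Y y :=
  ⟨φ.comp f.1, fun t ht => by
    have : f.1 t = x := f.2 t ht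
    simp [this, hφ]⟩

@[simp] lemma glMap_apply (φ : C(X, Y)) (hφ : φ x = y) (f : Ω^ N X x) (t : I^N) :
    glMap φ hφ f t = φ (f t) := rfl

lemma continuous_glMap (φ : C(X, Y)) (hφ : φ x = y) :
    Continuous (glMap φ hφ : Ω^ N X x → Ω^ N Y y) :=
  ((ContinuousMap.continuous_postcomp φ).comp continuous_subtype_val).subtype_mk _

/-- The map of homotopy groups (as a function). -/
def hgFun (N : Type*) (φ : C(X, Y)) (hφ : φ x = y) : HomotopyGroup N X x → HomotopyGroup N Y y :=
  Quotient.map (glMap φ hφ) (by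
    intro f g h
    have h' : hcls f = hcls g := hcls_eq_iff.2 h
    obtain ⟨F, hF, h0, h1, hb⟩ := exists_of_hcls_eq h'
    refine hcls_eq_iff.1 (hcls_eq_of (fun p => φ (F p)) (φ.continuous.comp hF) ?_ ?_ ?_)
    · intro t; simp [h0]
    · intro t; simp [h1]
    · intro s t ht; simp [hb s t ht, hφ])

lemma hgFun_cls (φ : C(X, Y)) (hφ : φ x = y) (f : Ω^ N X x) :
    hgFun N φ hφ (hcls f) = hcls (glMap φ hφ f) := rfl

lemma continuous_hcls : Continuous (hcls : Ω^ N X x → HomotopyGroup N X x) :=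
  continuous_quotient_mk'

lemma isQuotientMap_hcls : Topology.IsQuotientMap (hcls : Ω^ N X x → HomotopyGroup N X x) :=
  isQuotientMap_quotient_mk'

lemma continuous_hgFun (φ : C(X, Y)) (hφ : φ x = y) :
    Continuous (hgFun N φ hφ) := by
  rw [isQuotientMap_hcls.continuous_iff]
  exact continuous_hcls.comp (continuous_glMap φ hφ)

variable [DecidableEq N]

lemma hcls_mul [Nonempty N] (i : N) (p q : Ω^ N X x) :
    hcls p * hcls q = hcls (transAt i q p) :=
  HomotopyGroup.mul_spec

lemma hcls_const [Nonempty N] : hcls (const : Ω^ N X x) = 1 := rfl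

/-- The map of homotopy groups. -/
def hgMap (N : Type*) [DecidableEq N] [Nonempty N] (φ : C(X, Y)) (hφ : φ x = y) :
    HomotopyGroup N X x →* HomotopyGroup N Y y :=
  MonoidHom.mk' (hgFun N φ hφ) (by
    intro a b
    obtain ⟨f, rfl⟩ := hcls_surj a
    obtain ⟨g, rfl⟩ := hcls_surj b
    have i : N := Classical.arbitrary N
    rw [hcls_mul i, hgFun_cls, hgFun_cls, hgFun_cls, hcls_mul i]
    congr 1
    ext t
    simp only [transAt, coe_copy, glMap_apply]
    split_ifs <;> rfl)

lemma hgMap_cls [Nonempty N] (φ : C(X, Y)) (hφ : φ x = y) (f : Ω^ N X x) :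
    hgMap N φ hφ (hcls f) = hcls (glMap φ hφ f) := rfl

lemma hgMap_coe [Nonempty N] (φ : C(X, Y)) (hφ : φ x = y) :
    ⇑(hgMap N φ hφ) = hgFun N φ hφ := rfl

open Classical in
lemma continuous_glue [T1Space X] {Z : Type*} [TopologicalSpace Z] {F G : Z → X}
    (hF : Continuous F) (hG : Continuous G) (h : ∀ z, F z = x ∨ G z = x) :
    Continuous (fun z => if F z = x then G z else F z) := by
  have hA : IsClosed {z | F z = x} := isClosed_singleton.preimage hF
  have hB : IsClosed {z | G z = x} := isClosed_singleton.preimage hG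
  rw [← continuousOn_univ]
  have hu : (Set.univ : Set Z) = {z | F z = x} ∪ {z | G z = x} := by
    ext z; simpa using h z
  rw [hu]
  refine ContinuousOn.union_of_isClosed ?_ ?_ hA hB
  · exact hG.continuousOn.congr (fun z hz => by simp only [Set.mem_ofPred_eq] at hz; simp [hz])
  · refine hF.continuousOn.congr (fun z hz => ?_)
    simp only [Set.mem_ofPred_eq] at hz
    by_cases h' : F z = x <;> simp [h', hz]

lemma exists_split [T1Space X] [Nonempty N] (i : N) (c : I) (α : Ω^ N X x)
    (hα : ∀ t : I^N, t i = c → α t = x) :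
    ∃ β γ : Ω^ N X x, (∀ t, β t = if t i ≤ c then α t else x) ∧
      (∀ t, γ t = if t i ≤ c then x else α t) ∧ hcls α = hcls γ * hcls β := by
  have hβc : Continuous (fun t : I^N => if t i ≤ c then α t else x) := by
    refine Continuous.if_le (α.1.continuous) continuous_const (by fun_prop) continuous_const ?_
    intro t ht; exact hα t ht
  have hγc : Continuous (fun t : I^N => if t i ≤ c then x else α t) := by
    refine Continuous.if_le continuous_const (α.1.continuous) (by fun_prop) continuous_const ?_
    intro t ht; exact (hα t ht).symm
  let β : Ω^ N X x := ⟨⟨_, hβc⟩, fun t ht => by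
    have := α.2 t ht
    simp only [ContinuousMap.coe_mk, ite_eq_right_iff]; intro _; exact this⟩
  let γ : Ω^ N X x := ⟨⟨_, hγc⟩, fun t ht => by
    have := α.2 t ht
    simp only [ContinuousMap.coe_mk, ite_eq_left_iff]; intro _; exact this⟩
  have hβ : ∀ t, β t = if t i ≤ c then α t else x := fun t => rfl
  have hγ : ∀ t, γ t = if t i ≤ c then x else α t := fun t => rfl
  refine ⟨β, γ, hβ, hγ, ?_⟩
  rw [hcls_mul i]
  classical
  let φ : I × I → I := fun p => Set.projIcc 0 1 zero_le_one
    ((1 - (p.1 : ℝ)) * (p.2 : ℝ) + (p.1 : ℝ) * min (2 * (p.2 : ℝ)) 1)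
  let ψ : I × I → I := fun p => Set.projIcc 0 1 zero_le_one
    ((1 - (p.1 : ℝ)) * (p.2 : ℝ) + (p.1 : ℝ) * max (2 * (p.2 : ℝ) - 1) 0)
  have hφ : Continuous φ := continuous_projIcc.comp (by fun_prop)
  have hψ : Continuous ψ := continuous_projIcc.comp (by fun_prop)
  have hψφ : ∀ p, ψ p ≤ φ p := by
    intro p
    apply Set.monotone_projIcc
    have h1 : max (2 * (p.2 : ℝ) - 1) 0 ≤ min (2 * (p.2 : ℝ)) 1 := by
      have := p.2.2.1
      have := p.2.2.2
      apply max_le <;> apply le_min <;> linarith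
    have := mul_le_mul_of_nonneg_left h1 p.1.2.1
    linarith
  have hφ0 : ∀ s, φ (s, 0) = 0 := by
    intro s; norm_num [φ]
  have hφ1 : ∀ s, φ (s, 1) = 1 := by
    intro s; norm_num [φ]
  have hψ0 : ∀ s, ψ (s, 0) = 0 := by
    intro s; norm_num [ψ]
  have hψ1 : ∀ s, ψ (s, 1) = 1 := by
    intro s; norm_num [ψ]
  let F : I × (I^N) → X := fun p => β (Function.update p.2 i (φ (p.1, p.2 i)))
  let G : I × (I^N) → X := fun p => γ (Function.update p.2 i (ψ (p.1, p.2 i)))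
  have hF : Continuous F := by
    refine β.1.continuous.comp (Continuous.update continuous_snd i ?_)
    exact hφ.comp (by fun_prop)
  have hG : Continuous G := by
    refine γ.1.continuous.comp (Continuous.update continuous_snd i ?_)
    exact hψ.comp (by fun_prop)
  have hbd : ∀ (η : I × I → I), (∀ s, η (s, 0) = 0) → (∀ s, η (s, 1) = 1) →
      ∀ s, ∀ t ∈ Cube.boundary N, Function.update t i (η (s, t i)) ∈ Cube.boundary N := by
    rintro η h0 h1 s t ⟨j, hj⟩
    refine ⟨j, ?_⟩
    by_cases hji : j = i
    · subst hji
      rcases hj with hj | hj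
      · left; simp [hj, h0]
      · right; simp [hj, h1]
    · simpa [hji] using hj
  refine hcls_eq_of (fun p => if F p = x then G p else F p) (continuous_glue hF hG ?_) ?_ ?_ ?_
  · intro p
    by_cases h : φ (p.1, p.2 i) ≤ c
    · right
      simp only [G]
      rw [hγ, if_pos]
      simpa using (hψφ _).trans h
    · left
      simp only [F]
      rw [hβ, if_neg]
      simpa using h
  · intro t
    have e1 : φ (0, t i) = t i := by simp [φ]
    have e2 : ψ (0, t i) = t i := by simp [ψ]
    simp only [F, G, e1, e2, Function.update_eq_self, hβ, hγ]
    by_cases h : t i ≤ c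
    · simp only [if_pos h]
      split_ifs with h'
      · exact h'.symm
      · rfl
    · simp only [if_neg h, if_true]
  · intro t
    simp only [transAt, coe_copy, F, G]
    have e1 : φ (1, t i) = Set.projIcc 0 1 zero_le_one (min (2 * (t i : ℝ)) 1) := by simp [φ]
    have e2 : ψ (1, t i) = Set.projIcc 0 1 zero_le_one (max (2 * (t i : ℝ) - 1) 0) := by simp [ψ]
    rw [e1, e2]
    by_cases h : (t i : ℝ) ≤ 1 / 2
    · rw [if_pos h, min_eq_left (by linarith), max_eq_right (by linarith)]
      have : γ (Function.update t i (Set.projIcc 0 1 zero_le_one (0 : ℝ))) = x := by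
        apply γ.2; refine ⟨i, Or.inl ?_⟩; simp
      rw [this]
      split_ifs with h'
      · exact h'.symm
      · rfl
    · rw [if_neg h, min_eq_right (by linarith), max_eq_left (by linarith)]
      have : β (Function.update t i (Set.projIcc 0 1 zero_le_one (1 : ℝ))) = x := by
        apply β.2; refine ⟨i, Or.inr ?_⟩; simp
      rw [this, if_pos rfl]
  · intro s t ht
    have e1 : F (s, t) = x := β.2 _ (hbd φ hφ0 hφ1 s t ht)
    have e2 : G (s, t) = x := γ.2 _ (hbd ψ hψ0 hψ1 s t ht)
    simp [e1, e2]

/-- A loop vanishing on a finite family of hyperplanes, which on each cell takes values in one of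
two sets, has its class in the subgroup generated by loops in the two sets. -/
lemma mem_of_cells [T1Space X] [Nonempty N] (M : Subgroup (HomotopyGroup N X x)) (S T : Set X)
    (hS : ∀ f : Ω^ N X x, (∀ t, f t ∈ S) → hcls f ∈ M)
    (hT : ∀ f : Ω^ N X x, (∀ t, f t ∈ T) → hcls f ∈ M)
    (hxS : x ∈ S) (hxT : x ∈ T)
    (L : List (N × I)) : ∀ α : Ω^ N X x,
    (∀ p ∈ L, ∀ t : I^N, t p.1 = p.2 → α t = x) →
    (∀ t u : I^N, (∀ p ∈ L, t p.1 ≤ p.2 ↔ u p.1 ≤ p.2) →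
      α t ∉ T → α u ∈ S) → hcls α ∈ M := by
  induction L with
  | nil =>
    intro α _ h2
    by_cases h : ∃ t, α t ∉ T
    · obtain ⟨t, ht⟩ := h
      exact hS α (fun u => h2 t u (by simp) ht)
    · push Not at h
      exact hT α h
  | cons p L ih =>
    intro α h1 h2
    obtain ⟨β, γ, hβ, hγ, h⟩ := exists_split p.1 p.2 α (h1 p (by simp))
    rw [h]
    refine M.mul_mem (ih γ ?_ ?_) (ih β ?_ ?_)
    · intro q hq t ht
      rw [hγ, h1 q (by simp [hq]) t ht, ite_self]
    · intro t u htu ht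
      rw [hγ] at ht ⊢
      by_cases a : t p.1 ≤ p.2
      · rw [if_pos a] at ht
        exact absurd hxT ht
      · rw [if_neg a] at ht
        split_ifs with b
        · exact hxS
        · exact h2 t u (by
            intro q hq
            rcases List.mem_cons.1 hq with rfl | hq
            · simp [a, b]
            · exact htu q hq) ht
    · intro q hq t ht
      rw [hβ, h1 q (by simp [hq]) t ht, ite_self]
    · intro t u htu ht
      rw [hβ] at ht ⊢
      by_cases a : t p.1 ≤ p.2
      · rw [if_pos a] at ht
        split_ifs with b
        · exact h2 t u (by
            intro q hq
            rcases List.mem_cons.1 hq with rfl | hq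
            · simp [a, b]
            · exact htu q hq) ht
        · exact hxS
      · rw [if_neg a] at ht
        exact absurd hxT ht

end PartA

/-! ### Part B: pushing maps into a sphere off a thin set -/

section PartB

open Filter MeasureTheory OnePoint

lemma continuousAt_infty_of {Z V : Type*} [TopologicalSpace Z] [NormedAddCommGroup V]
    {g : Z → OnePoint V} {z₀ : Z} (h0 : g z₀ = ∞)
    (h : ∀ R : ℝ, ∀ᶠ z in 𝓝 z₀, ∀ v : V, g z = ↑v → R < ‖v‖) : ContinuousAt g z₀ := by
  rw [ContinuousAt, h0, hasBasis_nhds_infty.tendsto_right_iff]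
  rintro C ⟨_, hC⟩
  obtain ⟨R, hR⟩ := hC.isBounded.exists_norm_le
  filter_upwards [h R] with z hz
  induction hgz : g z using OnePoint.rec with
  | infty => right; rfl
  | coe v =>
    left
    refine ⟨v, ?_, rfl⟩
    intro hv
    exact absurd (hR v hv) (not_le.2 (hz v hgz))

lemma eventually_of_infty {Z V : Type*} [TopologicalSpace Z] [NormedAddCommGroup V]
    [ProperSpace V] {g : Z → OnePoint V} {z₀ : Z} (h0 : g z₀ = ∞) (hg : ContinuousAt g z₀)
    (R : ℝ) : ∀ᶠ z in 𝓝 z₀, ∀ v : V, g z = ↑v → R < ‖v‖ := by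
  rw [ContinuousAt, h0, hasBasis_nhds_infty.tendsto_right_iff] at hg
  filter_upwards [hg (Metric.closedBall 0 R) ⟨Metric.isClosed_closedBall,
    isCompact_closedBall 0 R⟩] with z hz v hv
  rw [hv] at hz
  rcases hz with ⟨w, hw, hwv⟩ | hz
  · rw [OnePoint.coe_injective hwv] at hw
    simpa using hw
  · exact absurd hz (OnePoint.coe_ne_infty v)

open Classical in
/-- The point with homogeneous coordinates `(l, v)`. -/
def homPt {V : Type*} [NormedAddCommGroup V] [NormedSpace ℝ V] (l : ℝ) (v : V) : OnePoint V :=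
  if l = 0 then ∞ else ↑(l⁻¹ • v)

lemma continuousAt_homPt {V : Type*} [NormedAddCommGroup V] [NormedSpace ℝ V] (p : ℝ × V)
    (hp : p.1 = 0 → p.2 ≠ 0) : ContinuousAt (fun q : ℝ × V => homPt q.1 q.2) p := by
  by_cases h : p.1 = 0
  · have hv := hp h
    refine continuousAt_infty_of (by simp [homPt, h]) (fun R => ?_)
    have hc : ContinuousAt (fun q : ℝ × V => ‖q.2‖ - R * |q.1|) p := by fun_prop
    have hpos : 0 < ‖p.2‖ - R * |p.1| := by simp [h, hv]
    filter_upwards [hc.eventually (lt_mem_nhds hpos)] with q hq v hqv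
    unfold homPt at hqv
    split_ifs at hqv with h1
    · exact absurd hqv.symm (OnePoint.coe_ne_infty v)
    · rw [← OnePoint.coe_injective hqv, norm_smul, norm_inv, Real.norm_eq_abs,
        inv_mul_eq_div, lt_div_iff₀ (abs_pos.2 h1)]
      linarith
  · have : (fun q : ℝ × V => homPt q.1 q.2) =ᶠ[𝓝 p] fun q => ((q.1⁻¹ • q.2 : V) : OnePoint V) := by
      filter_upwards [continuousAt_fst.eventually_ne h] with q hq
      simp only [homPt, if_neg hq]
    refine ContinuousAt.congr ?_ this.symm
    refine OnePoint.continuous_coe.continuousAt.comp ?_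
    exact (continuousAt_fst.inv₀ h).smul continuousAt_snd

/-- The finite part of a point of the one-point compactification. -/
def finPt {V : Type*} [Zero V] (p : OnePoint V) : V := p.elim 0 id

@[simp] lemma finPt_coe {V : Type*} [Zero V] (v : V) : finPt (v : OnePoint V) = v := rfl

lemma continuousAt_finPt {V : Type*} [NormedAddCommGroup V] (p : OnePoint V) (hp : p ≠ ∞) :
    ContinuousAt finPt p := by
  induction p using OnePoint.rec with
  | infty => exact absurd rfl hp
  | coe v =>
    rw [OnePoint.continuousAt_coe]
    exact continuousAt_id

/-- The cutoff function. -/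
def cutf (a r : ℝ) : ℝ := max 0 (min 1 (a - r))

lemma continuous_cutf (a : ℝ) : Continuous (cutf a) := by unfold cutf; fun_prop
lemma cutf_nonneg (a r : ℝ) : 0 ≤ cutf a r := le_max_left _ _
lemma cutf_le_one (a r : ℝ) : cutf a r ≤ 1 := max_le zero_le_one (min_le_left _ _)
lemma cutf_one {a r : ℝ} (h : r ≤ a - 1) : cutf a r = 1 := by
  unfold cutf; rw [min_eq_left (by linarith)]; simp
lemma cutf_zero {a r : ℝ} (h : a ≤ r) : cutf a r = 0 := by
  unfold cutf; rw [max_eq_left]; exact (min_le_right _ _).trans (by linarith)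

/-- The inclusion of the cube. -/
def cubeVal {d : ℕ} (t : I^(Fin d)) : Fin d → ℝ := fun i => (t i : ℝ)

lemma continuous_cubeVal {d : ℕ} : Continuous (cubeVal : (I^(Fin d)) → Fin d → ℝ) := by
  unfold cubeVal; fun_prop

lemma exists_smooth_approx {d : ℕ} (f : C(I^(Fin d), OnePoint (Fin d → ℝ))) :
    ∃ g : (Fin d → ℝ) → (Fin d → ℝ), Differentiable ℝ g ∧
      ∀ t, ∀ v : Fin d → ℝ, f t = ↑v → ‖v‖ ≤ 3 → ‖g (cubeVal t) - v‖ < 1 := by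
  let χ : OnePoint (Fin d → ℝ) → (Fin d → ℝ) := fun p => cutf 4 ‖finPt p‖ • finPt p
  have hχ : Continuous χ := by
    rw [continuous_iff_continuousAt]
    intro p
    by_cases hp : p = ∞
    · have : χ =ᶠ[𝓝 p] fun _ => 0 := by
        filter_upwards [eventually_of_infty (g := id) hp continuousAt_id 4] with q hq
        induction q using OnePoint.rec with
        | infty => simp [χ, finPt]
        | coe v => simp [χ, cutf_zero (hq v rfl).le]
      exact continuousAt_const.congr this.symm
    · have h := continuousAt_finPt p hp
      exact (((continuous_cutf 4).continuousAt.comp h.norm)).smul h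
  let pr : (Fin d → ℝ) → (I^(Fin d)) := fun v i => Set.projIcc 0 1 zero_le_one (v i)
  have hpr : UniformContinuous pr := by
    rw [uniformContinuous_pi]
    intro i
    exact (LipschitzWith.projIcc zero_le_one).uniformContinuous.comp
      (Pi.uniformContinuous_proj _ i)
  have hu : UniformContinuous (fun v => χ (f (pr v))) :=
    (CompactSpace.uniformContinuous_of_continuous (hχ.comp f.continuous)).comp hpr
  obtain ⟨g, hg, hd⟩ := hu.exists_contDiff_dist_le (ε := 1 / 2) (by norm_num)
  refine ⟨g, hg.differentiable (by simp), ?_⟩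
  intro t v htv hv
  have h1 : pr (cubeVal t) = t := by
    ext i; simp [pr, cubeVal]
  have h2 := hd (cubeVal t)
  rw [h1, htv] at h2
  simp only [χ, finPt_coe, cutf_one (show ‖v‖ ≤ 4 - 1 by linarith), one_smul] at h2
  rw [dist_eq_norm] at h2
  linarith

lemma null_planes {d : ℕ} (L : List (Fin d × I)) :
    volume {v : Fin d → ℝ | ∃ p ∈ L, v p.1 = (p.2 : ℝ)} = 0 := by
  have : {v : Fin d → ℝ | ∃ p ∈ L, v p.1 = (p.2 : ℝ)} =
      ⋃ p ∈ {p | p ∈ L}, {v : Fin d → ℝ | v p.1 = (p.2 : ℝ)} := by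
    ext v; simp
  rw [this, measure_biUnion_null_iff (Set.Finite.countable (List.finite_toSet L))]
  intro p _
  exact Measure.pi_hyperplane (fun _ => (volume : Measure ℝ)) p.1 (p.2 : ℝ)

lemma exists_generic {d : ℕ} (L : List (Fin d × I)) (g : (Fin d → ℝ) → (Fin d → ℝ))
    (hg : Differentiable ℝ g) :
    ∃ p : Fin d → ℝ, ‖p‖ < 1 ∧ ∃ δ > 0, ∀ t : I^(Fin d), (∃ q ∈ L, t q.1 = q.2) →
      δ ≤ ‖g (cubeVal t) - p‖ := by
  have h0 := addHaar_image_eq_zero_of_differentiableOn_of_addHaar_eq_zero volume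
    hg.differentiableOn (null_planes L)
  have h1 : ¬ Metric.ball (0 : Fin d → ℝ) 1 ⊆ g '' {v | ∃ p ∈ L, v p.1 = (p.2 : ℝ)} := by
    intro h
    have := measure_mono_null h h0
    exact absurd this (Metric.measure_ball_pos volume _ one_pos).ne'
  obtain ⟨p, hp, hpn⟩ := Set.not_subset.1 h1
  refine ⟨p, by simpa using hp, ?_⟩
  let K : Set (I^(Fin d)) := {t | ∃ q ∈ L, t q.1 = q.2}
  have hK : IsCompact K := by
    apply IsClosed.isCompact
    have : K = ⋃ q ∈ {q | q ∈ L}, {t : I^(Fin d) | t q.1 = q.2} := by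
      ext v; simp [K]
    rw [this]
    refine Set.Finite.isClosed_biUnion (List.finite_toSet L) ?_
    intro q _
    exact isClosed_eq (continuous_apply _) continuous_const
  have hc : ContinuousOn (fun t : I^(Fin d) => ‖g (cubeVal t) - p‖) K :=
    ((hg.continuous.comp continuous_cubeVal).sub continuous_const).norm.continuousOn
  rcases K.eq_empty_or_nonempty with hE | hE
  · refine ⟨1, one_pos, fun t ht => ?_⟩
    have : t ∈ K := ht
    simp [hE] at this
  · obtain ⟨t₀, ht₀, hmin⟩ := hK.exists_isMinOn hE hc
    refine ⟨‖g (cubeVal t₀) - p‖, ?_, fun t ht => hmin ht⟩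
    rw [gt_iff_lt, norm_pos_iff, sub_ne_zero]
    rintro h
    apply hpn
    obtain ⟨q, hq, hqt⟩ := ht₀
    exact ⟨cubeVal t₀, ⟨q, hq, by simp [cubeVal, hqt]⟩, h⟩

end PartB

section PartB2

open Filter MeasureTheory OnePoint

open Classical in
/-- Any map from the cube to the one-point compactification of `ℝ^d` can be homotoped, keeping the
preimage of infinity at infinity, to one which sends a given finite union of hyperplanes to
infinity. -/
lemma exists_push {d : ℕ} (L : List (Fin d × I)) (f : C(I^(Fin d), OnePoint (Fin d → ℝ))) :
    ∃ F : I × (I^(Fin d)) → OnePoint (Fin d → ℝ), Continuous F ∧ (∀ t, F (0, t) = f t) ∧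
      (∀ s t, f t = ∞ → F (s, t) = ∞) ∧
      (∀ q ∈ L, ∀ t : I^(Fin d), t q.1 = q.2 → F (1, t) = ∞) ∧
      (∀ t, F (1, t) ≠ ∞ → ∃ v : Fin d → ℝ, f t = ↑v ∧ ‖v‖ ≤ 3) := by
  obtain ⟨g, hg, hgf⟩ := exists_smooth_approx f
  obtain ⟨p, hp, δ₀, hδ₀, hδL⟩ := exists_generic L g hg
  let δ := min δ₀ (1 - ‖p‖)
  have hδ : 0 < δ := lt_min hδ₀ (by linarith)
  have hδ1 : δ ≤ 1 - ‖p‖ := min_le_right _ _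
  let v : I × (I^(Fin d)) → (Fin d → ℝ) := fun z => finPt (f z.2)
  let u : I × (I^(Fin d)) → (Fin d → ℝ) := fun z =>
    v z + ((z.1 : ℝ) * cutf 3 ‖v z‖) • (g (cubeVal z.2) - v z) - p
  let l : I × (I^(Fin d)) → ℝ := fun z => max 0 (1 - (z.1 : ℝ) * ‖u z‖ / δ)
  have hl0 : ∀ z, 0 ≤ l z := fun z => le_max_left _ _
  have hl1 : ∀ z, l z ≤ 1 := fun z => max_le zero_le_one (by
    have : 0 ≤ (z.1 : ℝ) * ‖u z‖ / δ := by have := z.1.2.1; positivity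
    linarith)
  have hvf : ∀ z (w : Fin d → ℝ), f z.2 = ↑w → v z = w := fun z w h => by simp [v, h]
  have hfv : ∀ z, f z.2 ≠ ∞ → f z.2 = ↑(v z) := by
    intro z hz
    obtain ⟨w, hw⟩ := OnePoint.ne_infty_iff_exists.1 hz
    rw [hvf z w hw.symm, hw]
  have hu3 : ∀ z, 3 ≤ ‖v z‖ → u z = v z - p := by
    intro z hz
    simp [u, cutf_zero hz]
  let F : I × (I^(Fin d)) → OnePoint (Fin d → ℝ) := fun z =>
    if f z.2 = ∞ then ∞ else homPt (l z) (u z + l z • p)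
  have hFl : ∀ z, F z ≠ ∞ → f z.2 ≠ ∞ ∧ l z ≠ 0 := by
    intro z hz
    constructor
    · intro h; exact hz (if_pos h)
    · intro h; apply hz; simp [F, homPt, h]
  refine ⟨F, ?_, ?_, ?_, ?_, ?_⟩
  · rw [continuous_iff_continuousAt]
    intro z₀
    by_cases hz : f z₀.2 = ∞
    · refine continuousAt_infty_of (if_pos hz) (fun R => ?_)
      have hc : ContinuousAt (fun z : I × (I^(Fin d)) => f z.2) z₀ := by fun_prop
      filter_upwards [eventually_of_infty (g := fun z : I × (I^(Fin d)) => f z.2) hz hc (max (R + 2) 3)] with z hz w hFw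
      have hne : F z ≠ ∞ := by rw [hFw]; exact OnePoint.coe_ne_infty w
      obtain ⟨h1, h2⟩ := hFl z hne
      have h3 := hz _ (hfv z h1)
      have hR := (le_max_left _ _).trans_lt h3
      have h4 := hu3 z ((le_max_right _ _).trans h3.le)
      have h5 : w = (l z)⁻¹ • (u z + l z • p) := by
        apply OnePoint.coe_injective
        rw [← hFw]
        simp [F, h1, homPt, h2]
      rw [smul_add, inv_smul_smul₀ h2, h4] at h5
      have hlpos : 0 < l z := lt_of_le_of_ne (hl0 z) (Ne.symm h2)
      have h6 : 1 ≤ (l z)⁻¹ := (one_le_inv₀ hlpos).2 (hl1 z)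
      have h7 : ‖v z‖ - 1 ≤ ‖v z - p‖ := by
        have := norm_sub_norm_le (v z) p; linarith
      have h8 : ‖v z - p‖ ≤ ‖(l z)⁻¹ • (v z - p)‖ := by
        rw [norm_smul, Real.norm_of_nonneg (by positivity)]
        exact le_mul_of_one_le_left (norm_nonneg _) h6
      have h9 : ‖(l z)⁻¹ • (v z - p)‖ ≤ ‖w‖ + ‖p‖ := by
        rw [h5]
        have := norm_sub_le ((l z)⁻¹ • (v z - p) + p) p
        simpa using this
      linarith
    · have hcf : ContinuousAt (fun z : I × (I^(Fin d)) => f z.2) z₀ := by fun_prop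
      have hev : ∀ᶠ z in 𝓝 z₀, f z.2 ≠ ∞ := hcf.eventually_ne hz
      have hvc : ContinuousAt v z₀ :=
        ContinuousAt.comp (g := finPt) (continuousAt_finPt _ hz) hcf
      have hgc : Continuous (fun z : I × (I^(Fin d)) => g (cubeVal z.2)) :=
        hg.continuous.comp (continuous_cubeVal.comp continuous_snd)
      have h1c : Continuous (fun z : I × (I^(Fin d)) => (z.1 : ℝ)) := by fun_prop
      have huc : ContinuousAt u z₀ := by
        refine ContinuousAt.sub (hvc.add (ContinuousAt.fun_smul ?_ ?_)) continuousAt_const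
        · exact h1c.continuousAt.mul ((continuous_cutf 3).continuousAt.comp hvc.norm)
        · exact hgc.continuousAt.sub hvc
      have hlc : ContinuousAt l z₀ := by
        refine Filter.Tendsto.max tendsto_const_nhds ?_
        exact continuousAt_const.sub ((h1c.continuousAt.mul huc.norm).div_const _)
      have hFe : F =ᶠ[𝓝 z₀] fun z => homPt (l z) (u z + l z • p) := by
        filter_upwards [hev] with z hz
        exact if_neg hz
      refine ContinuousAt.congr ?_ hFe.symm
      refine ContinuousAt.comp (g := fun q : ℝ × (Fin d → ℝ) => homPt q.1 q.2)
        (f := fun z => (l z, u z + l z • p)) (continuousAt_homPt _ ?_) ?_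
      · intro h h'
        simp only at h h'
        rw [h, zero_smul, add_zero] at h'
        simp [l, h'] at h
        
      · exact hlc.prodMk (huc.add (hlc.smul continuousAt_const))
  · intro t
    by_cases h : f t = ∞
    · simp [F, h]
    · have h1 := hfv (0, t) h
      have h2 : l (0, t) = 1 := by simp [l]
      have h3 : u (0, t) = v (0, t) - p := by simp [u]
      simp only [F, if_neg h, homPt, h2, h3]
      simpa using h1.symm
  · intro s t h
    exact if_pos h
  · intro q hq t ht
    by_contra hne
    obtain ⟨h1, h2⟩ := hFl _ hne
    have h3 : δ ≤ ‖u (1, t)‖ := by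
      by_cases h4 : ‖v (1, t)‖ ≤ 2
      · have : u (1, t) = g (cubeVal t) - p := by
          simp [u, cutf_one (show ‖v (1, t)‖ ≤ 3 - 1 by linarith)]
        rw [this]
        exact (min_le_left _ _).trans (hδL t ⟨q, hq, ht⟩)
      · push Not at h4
        have h5 : ‖v (1, t)‖ - 1 ≤ ‖u (1, t) + p‖ := by
          by_cases h6 : ‖v (1, t)‖ ≤ 3
          · have h7 := hgf t _ (hfv (1, t) h1) h6
            have h8 : u (1, t) + p = v (1, t) + cutf 3 ‖v (1, t)‖ • (g (cubeVal t) - v (1, t)) := by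
              simp [u]
            rw [h8]
            have h9 := norm_sub_le_norm_add (v (1, t))
              (cutf 3 ‖v (1, t)‖ • (g (cubeVal t) - v (1, t)))
            have h10 : ‖cutf 3 ‖v (1, t)‖ • (g (cubeVal t) - v (1, t))‖ ≤ 1 := by
              rw [norm_smul, Real.norm_of_nonneg (cutf_nonneg _ _)]
              exact mul_le_one₀ (cutf_le_one _ _) (norm_nonneg _) h7.le
            linarith
          · rw [hu3 _ (not_le.1 h6).le]
            simp
        have h6 := norm_add_le (u (1, t)) p
        linarith
    apply h2
    simp only [l]
    apply max_eq_left
    have : 1 ≤ ‖u (1, t)‖ / δ := (one_le_div hδ).2 h3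
    simpa using this
  · intro t hne
    obtain ⟨h1, h2⟩ := hFl _ hne
    refine ⟨v (1, t), hfv (1, t) h1, ?_⟩
    by_contra h3
    push Not at h3
    apply h2
    simp only [l]
    apply max_eq_left
    have h4 := hu3 _ h3.le
    have h5 := norm_sub_norm_le (v (1, t)) p
    have h6 : δ ≤ ‖u (1, t)‖ := by rw [h4]; linarith [norm_nonneg p]
    have : 1 ≤ ‖u (1, t)‖ / δ := (one_le_div hδ).2 h6
    simpa using this

end PartB2

/-! ### Part C: geometry of the Hawaiian earring -/

section PartC

open Filter OnePoint

lemma mem_hawSphere_iff {d j : ℕ} (hj : 1 ≤ j) (x : EuclideanSpace ℝ (Fin (d+1))) :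
    x ∈ hawSphere d j ↔ (j : ℝ) * ‖x‖ ^ 2 = 2 * x 0 := by
  have hj' : (0 : ℝ) < j := by exact_mod_cast hj
  unfold hawSphere
  rw [mem_sphere_iff_norm]
  have h1 : ‖x - EuclideanSpace.single (0 : Fin (d+1)) ((1 : ℝ)/j)‖ ^ 2 =
      ‖x‖ ^ 2 - 2 * ((1 : ℝ) / j * x 0) + (1 / j) ^ 2 := by
    rw [norm_sub_sq_real, EuclideanSpace.inner_single_right]
    simp
  rw [← sq_eq_sq₀ (norm_nonneg _) (by positivity), h1]
  constructor
  · intro h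
    field_simp at h
    nlinarith
  · intro h
    field_simp
    nlinarith

lemma norm_le_of_mem_hawSphere {d j : ℕ} (hj : 1 ≤ j) {x : EuclideanSpace ℝ (Fin (d+1))}
    (hx : x ∈ hawSphere d j) : ‖x‖ ≤ 2 / j := by
  have hj' : (0 : ℝ) < j := by exact_mod_cast hj
  unfold hawSphere at hx
  rw [mem_sphere_iff_norm] at hx
  have h := norm_add_le (x - EuclideanSpace.single (0 : Fin (d+1)) ((1 : ℝ)/j))
    (EuclideanSpace.single (0 : Fin (d+1)) ((1 : ℝ)/j))
  have h2 : ‖EuclideanSpace.single (0 : Fin (d+1)) ((1 : ℝ)/j)‖ = 1 / j := by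
    simp
  rw [sub_add_cancel, hx, h2] at h
  calc ‖x‖ ≤ 1 / j + 1 / j := h
    _ = 2 / j := by ring

/-- The index function. -/
def hq {d : ℕ} (x : EuclideanSpace ℝ (Fin (d+1))) : ℝ := 2 * x 0 / ‖x‖ ^ 2

lemma hq_eq {d j : ℕ} (hj : 1 ≤ j) {x : EuclideanSpace ℝ (Fin (d+1))}
    (hx : x ∈ hawSphere d j) (h0 : x ≠ 0) : hq x = j := by
  rw [mem_hawSphere_iff hj] at hx
  have : ‖x‖ ^ 2 ≠ 0 := by positivity
  unfold hq
  rw [← hx, mul_div_assoc, div_self this, mul_one]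

lemma hawSphere_inj {d i j : ℕ} (hi : 1 ≤ i) (hj : 1 ≤ j) {x : EuclideanSpace ℝ (Fin (d+1))}
    (hxi : x ∈ hawSphere d i) (hxj : x ∈ hawSphere d j) (h0 : x ≠ 0) : i = j := by
  have h := (hq_eq hi hxi h0).symm.trans (hq_eq hj hxj h0)
  exact_mod_cast h

/-- The union of the spheres of index larger than `k`. -/
def tailH (d k : ℕ) : Set (EuclideanSpace ℝ (Fin (d+1))) :=
  ⋃ j ∈ {j : ℕ | k + 1 ≤ j}, hawSphere d j

lemma mem_tailH {d k : ℕ} {x : EuclideanSpace ℝ (Fin (d+1))} :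
    x ∈ tailH d k ↔ ∃ j, k + 1 ≤ j ∧ x ∈ hawSphere d j := by
  simp [tailH]

lemma zero_mem_tailH (d k : ℕ) : (0 : EuclideanSpace ℝ (Fin (d+1))) ∈ tailH d k :=
  mem_tailH.2 ⟨k + 1, le_rfl, zero_mem_hawSphere d _⟩

lemma hawSphere_subset_tailH {d k j : ℕ} (h : k + 1 ≤ j) : hawSphere d j ⊆ tailH d k :=
  fun _ hx => mem_tailH.2 ⟨j, h, hx⟩

lemma tailH_anti {d k l : ℕ} (h : k ≤ l) : tailH d l ⊆ tailH d k := by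
  intro x hx
  obtain ⟨j, hj, hxj⟩ := mem_tailH.1 hx
  exact mem_tailH.2 ⟨j, by omega, hxj⟩

lemma norm_le_of_mem_tailH {d k : ℕ} {x : EuclideanSpace ℝ (Fin (d+1))}
    (hx : x ∈ tailH d k) : ‖x‖ ≤ 2 / ((k : ℝ) + 1) := by
  obtain ⟨j, hj, hxj⟩ := mem_tailH.1 hx
  refine (norm_le_of_mem_hawSphere (by omega) hxj).trans ?_
  have : ((k + 1 : ℕ) : ℝ) ≤ j := by exact_mod_cast hj
  push_cast at this
  gcongr

lemma eventually_mem_hawSphere {d j : ℕ} {Z : Type*} [TopologicalSpace Z]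
    {α : Z → EuclideanSpace ℝ (Fin (d+1))} (hα : Continuous α) (hH : ∀ z, α z ∈ tailH d 0)
    (hj : 1 ≤ j) {z₀ : Z} (h0 : α z₀ ≠ 0) (hz : α z₀ ∈ hawSphere d j) :
    ∀ᶠ z in 𝓝 z₀, α z ≠ 0 ∧ α z ∈ hawSphere d j := by
  have hc : ContinuousAt (fun z => hq (α z)) z₀ := by
    unfold hq
    refine ContinuousAt.div₀ ?_ ?_ (by positivity)
    · fun_prop
    · fun_prop
  have h1 : ∀ᶠ z in 𝓝 z₀, dist (hq (α z)) (hq (α z₀)) < 1 :=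
    hc.eventually (Metric.ball_mem_nhds _ one_pos)
  filter_upwards [h1, hα.continuousAt.eventually_ne h0] with z hz1 hz2
  refine ⟨hz2, ?_⟩
  obtain ⟨i, hi, hzi⟩ := mem_tailH.1 (hH z)
  rw [hq_eq hj hz h0, hq_eq (by omega) hzi hz2, Real.dist_eq] at hz1
  have : i = j := by
    have h2 : |((i : ℤ) - (j : ℤ))| < 1 := by exact_mod_cast hz1
    have := Int.abs_lt_one_iff.1 h2
    omega
  rwa [← this]

lemma exists_glue {d : ℕ} {Z : Type*} [TopologicalSpace Z]
    {α : Z → EuclideanSpace ℝ (Fin (d+1))} (hα : Continuous α) (hH : ∀ z, α z ∈ tailH d 0)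
    (G : ℕ → Z → EuclideanSpace ℝ (Fin (d+1))) (hG : ∀ j, 1 ≤ j → Continuous (G j))
    (hGS : ∀ j, 1 ≤ j → ∀ z, G j z ∈ hawSphere d j)
    (hG0 : ∀ j, 1 ≤ j → ∀ z, (α z ∈ hawSphere d j → α z = 0) → G j z = 0) :
    ∃ H : Z → EuclideanSpace ℝ (Fin (d+1)), Continuous H ∧
      ∀ z j, 1 ≤ j → α z ∈ hawSphere d j → H z = G j z := by
  choose idx hidx1 hidx2 using fun z => mem_tailH.1 (hH z)
  have key : ∀ z j, 1 ≤ j → α z ∈ hawSphere d j → G (idx z) z = G j z := by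
    intro z j hj hz
    by_cases h : α z = 0
    · rw [hG0 _ (by have := hidx1 z; omega) z (fun _ => h), hG0 _ hj z (fun _ => h)]
    · rw [hawSphere_inj (by have := hidx1 z; omega) hj (hidx2 z) hz h]
  refine ⟨fun z => G (idx z) z, ?_, key⟩
  rw [continuous_iff_continuousAt]
  intro z₀
  by_cases h0 : α z₀ = 0
  · have hz0 : G (idx z₀) z₀ = 0 := hG0 _ (by have := hidx1 z₀; omega) _ (fun _ => h0)
    rw [ContinuousAt, hz0, Metric.tendsto_nhds]
    intro ε hε
    obtain ⟨J, hJ⟩ := exists_nat_gt (2 / ε)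
    have hev : ∀ᶠ z in 𝓝 z₀, ∀ j ∈ Finset.Icc 1 J, ‖G j z‖ < ε := by
      rw [Filter.eventually_all_finset]
      intro j hj
      have hj1 := (Finset.mem_Icc.1 hj).1
      have hc : ContinuousAt (fun z => ‖G j z‖) z₀ := (hG j hj1).norm.continuousAt
      refine hc.eventually (gt_mem_nhds ?_)
      simpa [hG0 j hj1 z₀ (fun _ => h0)] using hε
    filter_upwards [hev] with z hz
    rw [dist_zero_right]
    have h1 : 1 ≤ idx z := by have := hidx1 z; omega
    by_cases h : idx z ≤ J
    · exact hz _ (Finset.mem_Icc.2 ⟨h1, h⟩)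
    · refine (norm_le_of_mem_hawSphere h1 (hGS _ h1 z)).trans_lt ?_
      have h2 : (J : ℝ) < idx z := by exact_mod_cast not_le.1 h
      have h3 : (0 : ℝ) < idx z := by exact_mod_cast h1
      rw [div_lt_iff₀ h3]
      rw [div_lt_iff₀ hε] at hJ
      nlinarith
  · have h1 : 1 ≤ idx z₀ := by have := hidx1 z₀; omega
    have : (fun z => G (idx z) z) =ᶠ[𝓝 z₀] G (idx z₀) := by
      filter_upwards [eventually_mem_hawSphere hα hH h1 h0 (hidx2 z₀)] with z hz
      exact key z _ h1 hz.2
    exact (hG _ h1).continuousAt.congr this.symm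

open Classical in
/-- Retraction onto the `j`-th sphere. -/
def hret {d : ℕ} (j : ℕ) (x : EuclideanSpace ℝ (Fin (d+1))) : EuclideanSpace ℝ (Fin (d+1)) :=
  if x ∈ hawSphere d j then x else 0

lemma hret_mem {d : ℕ} (j : ℕ) (x : EuclideanSpace ℝ (Fin (d+1))) : hret j x ∈ hawSphere d j := by
  unfold hret
  split_ifs with h
  · exact h
  · exact zero_mem_hawSphere d j

lemma hret_of_mem {d j : ℕ} {x : EuclideanSpace ℝ (Fin (d+1))} (h : x ∈ hawSphere d j) :
    hret j x = x := if_pos h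

lemma hret_zero {d j : ℕ} : hret j (0 : EuclideanSpace ℝ (Fin (d+1))) = 0 :=
  hret_of_mem (zero_mem_hawSphere d j)

lemma hret_of_mem_ne {d i j : ℕ} (hi : 1 ≤ i) (hj : 1 ≤ j) (hij : i ≠ j)
    {x : EuclideanSpace ℝ (Fin (d+1))} (h : x ∈ hawSphere d i) : hret j x = 0 := by
  unfold hret
  split_ifs with h'
  · by_contra h0
    exact hij (hawSphere_inj hi hj h h' h0)
  · rfl

lemma continuous_hret {d j : ℕ} (hj : 1 ≤ j) {Z : Type*} [TopologicalSpace Z]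
    {α : Z → EuclideanSpace ℝ (Fin (d+1))} (hα : Continuous α) (hH : ∀ z, α z ∈ tailH d 0) :
    Continuous (fun z => hret j (α z)) := by
  rw [continuous_iff_continuousAt]
  intro z₀
  by_cases h0 : α z₀ = 0
  · rw [ContinuousAt, h0, hret_zero]
    have h1 : Tendsto (fun z => ‖α z‖) (𝓝 z₀) (𝓝 0) := by
      have := hα.norm.continuousAt (x := z₀)
      rwa [ContinuousAt, h0, norm_zero] at this
    refine squeeze_zero_norm (fun z => ?_) h1
    unfold hret
    split_ifs <;> simp
  · obtain ⟨i, hi, hzi⟩ := mem_tailH.1 (hH z₀)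
    have hi1 : 1 ≤ i := by omega
    have hev := eventually_mem_hawSphere hα hH hi1 h0 hzi
    by_cases hij : i = j
    · subst hij
      refine hα.continuousAt.congr ?_
      filter_upwards [hev] with z hz
      exact (hret_of_mem hz.2).symm
    · refine (continuousAt_const (y := 0)).congr ?_
      filter_upwards [hev] with z hz
      exact (hret_of_mem_ne hi1 hj hij hz.2).symm

lemma exists_homeo {d j : ℕ} (hj : 1 ≤ j) :
    ∃ e : OnePoint (Fin d → ℝ) ≃ₜ hawSphere d j, (e ∞ : EuclideanSpace ℝ (Fin (d+1))) = 0 := by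
  have hj' : (0 : ℝ) < j := by exact_mod_cast hj
  let v : EuclideanSpace ℝ (Fin (d+1)) := -EuclideanSpace.single 0 1
  have hv : ‖v‖ = 1 := by simp [v]
  have hv₀ : v ≠ 0 := fun contra ↦ by simp [contra] at hv
  have hfact : Fact (Module.finrank ℝ (EuclideanSpace ℝ (Fin (d+1))) = d + 1) := ⟨by simp⟩
  have hV : Module.finrank ℝ (Fin d → ℝ) = Module.finrank ℝ (Submodule.span ℝ {v})ᗮ := by
    rw [Submodule.finrank_orthogonal_span_singleton (n := d) hv₀]; simp
  let e : (Fin d → ℝ) ≃ₜ (Submodule.span ℝ {v})ᗮ :=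
    (FiniteDimensional.nonempty_continuousLinearEquiv_of_finrank_eq hV).some.toHomeomorph
  let c : EuclideanSpace ℝ (Fin (d+1)) := EuclideanSpace.single 0 ((1 : ℝ)/j)
  let s : Metric.sphere (0 : EuclideanSpace ℝ (Fin (d+1))) 1 ≃ₜ hawSphere d j :=
    { toFun := fun x => ⟨c + (1 / (j : ℝ)) • (x : EuclideanSpace ℝ (Fin (d+1))), by
        unfold hawSphere
        rw [mem_sphere_iff_norm]
        have := norm_eq_of_mem_sphere x
        simp [c, norm_smul, this]⟩
      invFun := fun y => ⟨(j : ℝ) • ((y : EuclideanSpace ℝ (Fin (d+1))) - c), by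
        have := y.2
        unfold hawSphere at this
        rw [mem_sphere_iff_norm] at this
        rw [mem_sphere_zero_iff_norm, norm_smul, this]
        simp [hj'.ne']⟩
      left_inv := fun x => by
        ext1
        simp [smul_smul, hj'.ne']
      right_inv := fun y => by
        ext1
        simp [smul_smul, hj'.ne']
      continuous_toFun := by fun_prop
      continuous_invFun := by fun_prop }
  refine ⟨(e.onePointCongr.trans (onePointHyperplaneHomeoUnitSphere hv)).trans s, ?_⟩
  have h1 : (e.onePointCongr.trans (onePointHyperplaneHomeoUnitSphere hv)) ∞ =
    ⟨v, by simp [hv]⟩ := rfl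
  rw [Homeomorph.trans_apply, h1]
  change c + (1 / (j : ℝ)) • v = 0
  ext i
  by_cases hi : i = 0
  · subst hi; simp [c, v]
  · simp [c, v, hi]

lemma exists_push_sphere {d j : ℕ} (hj : 1 ≤ j) (f : (I^(Fin d)) → EuclideanSpace ℝ (Fin (d+1)))
    (hf : Continuous f) (hfS : ∀ t, f t ∈ hawSphere d j) :
    ∃ C : Set (I^(Fin d)), IsCompact C ∧ (∀ t ∈ C, f t ≠ 0) ∧ ∀ L : List (Fin d × I),
    ∃ F : I × (I^(Fin d)) → EuclideanSpace ℝ (Fin (d+1)), Continuous F ∧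
      (∀ z, F z ∈ hawSphere d j) ∧ (∀ t, F (0, t) = f t) ∧
      (∀ s t, f t = 0 → F (s, t) = 0) ∧
      (∀ q ∈ L, ∀ t : I^(Fin d), t q.1 = q.2 → F (1, t) = 0) ∧
      (∀ t, F (1, t) ≠ 0 → t ∈ C) := by
  obtain ⟨e, he⟩ := exists_homeo (d := d) hj
  have he0 : ∀ x : OnePoint (Fin d → ℝ), (e x : EuclideanSpace ℝ (Fin (d+1))) = 0 ↔ x = ∞ := by
    intro x
    rw [← he]
    constructor
    · intro h; exact e.injective (Subtype.ext h)
    · rintro rfl; rfl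
  let f' : C(I^(Fin d), OnePoint (Fin d → ℝ)) :=
    ⟨fun t => e.symm ⟨f t, hfS t⟩, e.symm.continuous.comp (hf.subtype_mk _)⟩
  have hf' : ∀ t, (e (f' t) : EuclideanSpace ℝ (Fin (d+1))) = f t := by
    intro t; simp [f']
  let B : Set (OnePoint (Fin d → ℝ)) := 
    (fun v : Fin d → ℝ => (v : OnePoint (Fin d → ℝ))) '' Metric.closedBall (0 : Fin d → ℝ) 3
  have hB : IsCompact B := (isCompact_closedBall 0 3).image OnePoint.continuous_coe
  refine ⟨f' ⁻¹' B, (hB.isClosed.preimage f'.continuous).isCompact, ?_, ?_⟩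
  · rintro t ⟨v, _, hv⟩ h
    rw [← hf', he0, ← hv] at h
    exact OnePoint.coe_ne_infty v h
  · intro L
    obtain ⟨F, hF, h0, hinf, hL, h1⟩ := exists_push L f'
    refine ⟨fun z => e (F z), continuous_subtype_val.comp (e.continuous.comp hF),
      fun z => (e (F z)).2, ?_, ?_, ?_, ?_⟩
    · intro t; simp only [h0, hf']
    · intro s t ht
      rw [← hf', he0] at ht
      rw [he0]; exact hinf s t ht
    · intro q hq t ht
      rw [he0]; exact hL q hq t ht
    · intro t ht
      have : F (1, t) ≠ ∞ := fun h => ht ((he0 _).2 h)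
      obtain ⟨v, hv, hv3⟩ := h1 t this
      exact ⟨v, by simpa using hv3, hv.symm⟩

end PartC

/-! ### Part D: splitting off one sphere -/

section PartD

/-- Base point of the tail. -/
def tpt (d k : ℕ) : tailH d k := ⟨0, zero_mem_tailH d k⟩

/-- Base point of a sphere. -/
def spt (d j : ℕ) : hawSphere d j := ⟨0, zero_mem_hawSphere d j⟩

/-- Inclusion of tails. -/
def tincl (d : ℕ) {k l : ℕ} (h : k ≤ l) : C(tailH d l, tailH d k) :=
  ⟨Set.inclusion (tailH_anti h), continuous_inclusion (tailH_anti h)⟩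

/-- Inclusion of a sphere in a tail. -/
def sincl (d : ℕ) {k j : ℕ} (h : k + 1 ≤ j) : C(hawSphere d j, tailH d k) :=
  ⟨Set.inclusion (hawSphere_subset_tailH h), continuous_inclusion (hawSphere_subset_tailH h)⟩

lemma continuous_hret_val (d k : ℕ) {j : ℕ} (h : 1 ≤ j) :
    Continuous (fun x : tailH d k => hret j (x : EuclideanSpace ℝ (Fin (d+1)))) :=
  continuous_hret (Z := tailH d k) (α := fun x => (x : EuclideanSpace ℝ (Fin (d+1)))) h
    continuous_subtype_val (fun z => tailH_anti (Nat.zero_le k) z.2)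

/-- Retraction of a tail to a sphere. -/
def tretr (d k : ℕ) {j : ℕ} (h : 1 ≤ j) : C(tailH d k, hawSphere d j) where
  toFun x := ⟨hret j (x : EuclideanSpace ℝ (Fin (d+1))), hret_mem j _⟩
  continuous_toFun := (continuous_hret_val d k h).subtype_mk _

lemma tretr_tpt (d k : ℕ) {j : ℕ} (h : 1 ≤ j) : tretr d k h (tpt d k) = spt d j :=
  Subtype.ext hret_zero

lemma exists_grid {d : ℕ} {δ : ℝ} (hδ : 0 < δ) : ∃ L : List (Fin d × I), ∀ t u : I^(Fin d),
    (∀ p ∈ L, t p.1 ≤ p.2 ↔ u p.1 ≤ p.2) → dist t u < δ := by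
  obtain ⟨n, hn⟩ := exists_nat_one_div_lt hδ
  have hN : (0 : ℝ) < (n : ℝ) + 1 := by positivity
  let S : Finset (Fin d × ℕ) := Finset.univ ×ˢ Finset.range (n + 2)
  refine ⟨S.toList.map (fun p => (p.1, Set.projIcc (0 : ℝ) 1 zero_le_one (p.2 / ((n : ℝ) + 1)))),
    ?_⟩
  intro t u h
  have h' : ∀ (i : Fin d) (a : ℕ), a ≤ n + 1 →
      ((t i : ℝ) ≤ a / ((n : ℝ) + 1) ↔ (u i : ℝ) ≤ a / ((n : ℝ) + 1)) := by
    intro i a ha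
    have h2 := h (i, Set.projIcc (0 : ℝ) 1 zero_le_one (a / ((n : ℝ) + 1))) (by
      rw [List.mem_map]
      refine ⟨(i, a), ?_, rfl⟩
      simp [S]; omega)
    have ha' : (a : ℝ) ≤ n + 1 := by exact_mod_cast ha
    have h3 : ((Set.projIcc (0 : ℝ) 1 zero_le_one (a / ((n : ℝ) + 1)) : I) : ℝ) =
        a / ((n : ℝ) + 1) := by
      rw [Set.projIcc_of_mem zero_le_one ⟨by positivity, (div_le_one hN).2 ha'⟩]
    rw [← Subtype.coe_le_coe, ← Subtype.coe_le_coe, h3] at h2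
    exact h2
  have key : ∀ x y : I, (∀ a : ℕ, a ≤ n + 1 →
      ((x : ℝ) ≤ a / ((n : ℝ) + 1) → (y : ℝ) ≤ a / ((n : ℝ) + 1))) → (y : ℝ) - x < δ := by
    intro x y hxy
    have hx0 : (0 : ℝ) ≤ x := x.2.1
    have hx1 : (x : ℝ) ≤ 1 := x.2.2
    have h1 : ⌈(x : ℝ) * ((n : ℝ) + 1)⌉₊ ≤ n + 1 := by
      rw [Nat.ceil_le]; push_cast; nlinarith
    have h2 := hxy _ h1 (by rw [le_div_iff₀ hN]; exact Nat.le_ceil _)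
    have h3 := Nat.ceil_lt_add_one (a := (x : ℝ) * ((n : ℝ) + 1)) (by positivity)
    have h4 : (⌈(x : ℝ) * ((n : ℝ) + 1)⌉₊ : ℝ) / ((n : ℝ) + 1) < x + 1 / ((n : ℝ) + 1) := by
      rw [div_lt_iff₀ hN, add_mul, one_div, inv_mul_cancel₀ hN.ne']; exact h3
    linarith
  rw [dist_pi_lt_iff hδ]
  intro i
  rw [Subtype.dist_eq, Real.dist_eq, abs_sub_lt_iff]
  exact ⟨key _ _ (fun a ha => (h' i a ha).2), key _ _ (fun a ha => (h' i a ha).1)⟩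

lemma mem_sphere_or_tail {d k : ℕ} {x : EuclideanSpace ℝ (Fin (d+1))} (hx : x ∈ tailH d k) :
    x ∈ hawSphere d (k+1) ∨ x ∈ tailH d (k+1) := by
  obtain ⟨j, hj, hxj⟩ := mem_tailH.1 hx
  rcases eq_or_lt_of_le hj with h | h
  · left; rw [h]; exact hxj
  · right; exact mem_tailH.2 ⟨j, h, hxj⟩

/-- The two subgroups coming from the first sphere and the rest generate. -/
lemma cls_mem_sup {m k : ℕ} (M : Subgroup (HomotopyGroup (Fin (m+2)) (tailH (m+2) k) (tpt (m+2) k)))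
    (hS : ∀ f : Ω^ (Fin (m+2)) (tailH (m+2) k) (tpt (m+2) k),
      (∀ t, (f t : EuclideanSpace ℝ (Fin (m+2+1))) ∈ hawSphere (m+2) (k+1)) → hcls f ∈ M)
    (hT : ∀ f : Ω^ (Fin (m+2)) (tailH (m+2) k) (tpt (m+2) k),
      (∀ t, (f t : EuclideanSpace ℝ (Fin (m+2+1))) ∈ tailH (m+2) (k+1)) → hcls f ∈ M)
    (α : Ω^ (Fin (m+2)) (tailH (m+2) k) (tpt (m+2) k)) : hcls α ∈ M := by
  have hαc : Continuous (fun t => (α t : EuclideanSpace ℝ (Fin (m+2+1)))) :=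
    continuous_subtype_val.comp α.1.continuous
  have hα0 : ∀ t, (α t : EuclideanSpace ℝ (Fin (m+2+1))) ∈ tailH (m+2) 0 :=
    fun t => tailH_anti (Nat.zero_le k) (α t).2
  have hpush := fun (j : ℕ) (hj : 1 ≤ j) =>
    exists_push_sphere hj (fun t => hret j (α t : EuclideanSpace ℝ (Fin (m+2+1))))
      (continuous_hret hj hαc hα0) (fun t => hret_mem j _)
  choose C hC hC0 hF using hpush
  have hopen : IsOpen {t : I^(Fin (m+2)) |
      hret (k+1) (α t : EuclideanSpace ℝ (Fin (m+2+1))) ≠ 0} :=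
    isOpen_ne_fun (continuous_hret (by omega) hαc hα0) continuous_const
  obtain ⟨δ, hδ, hthick⟩ := (hC (k+1) (by omega)).exists_thickening_subset_open hopen
    (fun t ht => hC0 (k+1) (by omega) t ht)
  obtain ⟨L, hL⟩ := exists_grid (d := m+2) hδ
  have hF' := fun j hj => hF j hj L
  choose F hFc hFS hF0 hFz hFL hF1 using hF'
  obtain ⟨H, hHc, hH⟩ := exists_glue (Z := I × (I^(Fin (m+2))))
    (α := fun z => (α z.2 : EuclideanSpace ℝ (Fin (m+2+1)))) (hαc.comp continuous_snd)
    (fun z => hα0 z.2) (fun j z => if h : 1 ≤ j then F j h z else 0)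
    (fun j hj => by simpa [hj] using hFc j hj)
    (fun j hj z => by simpa [hj] using hFS j hj z)
    (fun j hj z hz => by
      simp only [hj, dif_pos]
      refine hFz j hj z.1 z.2 ?_
      unfold hret
      split_ifs with h'
      · exact hz h'
      · rfl)
  have hH' : ∀ z j (hj : 1 ≤ j), (α z.2 : EuclideanSpace ℝ (Fin (m+2+1))) ∈ hawSphere (m+2) j →
      H z = F j hj z := by
    intro z j hj hz
    simpa [hj] using hH z j hj hz
  have hHmem : ∀ z, H z ∈ tailH (m+2) k := by
    intro z
    obtain ⟨j, hj, hxj⟩ := mem_tailH.1 (α z.2).2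
    rw [hH' z j (by omega) hxj]
    exact mem_tailH.2 ⟨j, hj, hFS j _ z⟩
  have hHb : ∀ s, ∀ t ∈ Cube.boundary (Fin (m+2)), H (s, t) = 0 := by
    intro s t ht
    have h1 : (α t : EuclideanSpace ℝ (Fin (m+2+1))) = 0 := by
      have := α.2 t ht
      exact congrArg Subtype.val this
    rw [hH' (s, t) 1 le_rfl (by simp only [h1]; exact zero_mem_hawSphere _ _)]
    refine hFz 1 le_rfl s t ?_
    simp only [h1, hret_zero]
  let α' : Ω^ (Fin (m+2)) (tailH (m+2) k) (tpt (m+2) k) :=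
    ⟨⟨fun t => ⟨H (1, t), hHmem _⟩, (hHc.comp (by fun_prop)).subtype_mk _⟩,
      fun t ht => Subtype.ext (hHb 1 t ht)⟩
  have hα' : ∀ t, (α' t : EuclideanSpace ℝ (Fin (m+2+1))) = H (1, t) := fun t => rfl
  have hcl : hcls α = hcls α' := by
    refine hcls_eq_of (fun z => ⟨H z, hHmem z⟩) (hHc.subtype_mk _) ?_ (fun t => rfl)
      (fun s t ht => Subtype.ext (hHb s t ht))
    intro t
    apply Subtype.ext
    obtain ⟨j, hj, hxj⟩ := mem_tailH.1 (α t).2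
    change H (0, t) = _
    rw [hH' (0, t) j (by omega) hxj, hF0, hret_of_mem hxj]
  rw [hcl]
  refine mem_of_cells M {x | (x : EuclideanSpace ℝ (Fin (m+2+1))) ∈ hawSphere (m+2) (k+1)}
    {x | (x : EuclideanSpace ℝ (Fin (m+2+1))) ∈ tailH (m+2) (k+1)} hS hT
    (zero_mem_hawSphere _ _) (zero_mem_tailH _ _) L α' ?_ ?_
  · intro p hp t ht
    apply Subtype.ext
    obtain ⟨j, hj, hxj⟩ := mem_tailH.1 (α t).2
    rw [hα', hH' (1, t) j (by omega) hxj]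
    exact hFL j _ p hp t ht
  · intro t u htu ht
    have ht' : H (1, t) ∉ tailH (m+2) (k+1) := ht
    have h1 : (α t : EuclideanSpace ℝ (Fin (m+2+1))) ∈ hawSphere (m+2) (k+1) := by
      rcases mem_sphere_or_tail (α t).2 with h | h
      · exact h
      · exfalso
        obtain ⟨j, hj, hxj⟩ := mem_tailH.1 h
        apply ht'
        rw [hH' (1, t) j (by omega) hxj]
        exact mem_tailH.2 ⟨j, hj, hFS j _ _⟩
    have h2 : t ∈ C (k+1) (by omega) := by
      apply hF1 (k+1) (by omega)
      intro h0
      apply ht'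
      rw [hH' (1, t) (k+1) (by omega) h1, h0]
      exact zero_mem_tailH _ _
    have h3 : u ∈ Metric.thickening δ (C (k+1) (by omega)) := by
      rw [Metric.mem_thickening_iff]
      refine ⟨t, h2, ?_⟩
      rw [dist_comm]
      exact hL t u htu
    have h4 := hthick h3
    have h5 : (α u : EuclideanSpace ℝ (Fin (m+2+1))) ∈ hawSphere (m+2) (k+1) := by
      by_contra h
      exact h4 (if_neg h)
    change H (1, u) ∈ hawSphere (m+2) (k+1)
    rw [hH' (1, u) (k+1) (by omega) h5]
    exact hFS _ _ _

lemma exists_lift {m k : ℕ} (a : HomotopyGroup (Fin (m+2)) (tailH (m+2) k) (tpt (m+2) k))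
    (ha : hgMap (Fin (m+2)) (tretr (m+2) k (by omega : 1 ≤ k+1)) (tretr_tpt _ _ _) a = 1) :
    ∃ b, hgMap (Fin (m+2)) (x := tpt (m+2) (k+1)) (tincl (m+2) (Nat.le_succ k)) (rfl : _ = tpt (m+2) k) b = a := by
  let ι := hgMap (Fin (m+2)) (x := spt (m+2) (k+1)) (sincl (m+2) (le_refl (k+1))) (rfl : _ = tpt (m+2) k)
  let τ := hgMap (Fin (m+2)) (x := tpt (m+2) (k+1)) (tincl (m+2) (Nat.le_succ k)) (rfl : _ = tpt (m+2) k)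
  let ρ := hgMap (Fin (m+2)) (tretr (m+2) k (by omega : 1 ≤ k+1)) (tretr_tpt _ _ _)
  have hρι : ∀ s, ρ (ι s) = s := by
    intro s
    obtain ⟨f, rfl⟩ := hcls_surj s
    change hcls (glMap _ _ (glMap _ _ f)) = _
    congr 1
    ext t : 1
    exact Subtype.ext (hret_of_mem (f t).2)
  have hρτ : ∀ s, ρ (τ s) = 1 := by
    intro s
    obtain ⟨f, rfl⟩ := hcls_surj s
    change hcls (glMap _ _ (glMap _ _ f)) = _
    rw [← hcls_const]
    congr 1
    ext t : 1
    apply Subtype.ext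
    obtain ⟨j, hj, hxj⟩ := mem_tailH.1 (f t).2
    exact hret_of_mem_ne (by omega) (by omega) (by omega) hxj
  have hcomm : ∀ x y : HomotopyGroup (Fin (m+2)) (tailH (m+2) k) (tpt (m+2) k), x * y = y * x :=
    fun x y => (HomotopyGroup.commGroup (N := Fin (m+2)) (x := tpt (m+2) k)).mul_comm x y
  have hn : τ.range.Normal := ⟨fun x hx g => by rw [hcomm g x, mul_inv_cancel_right]; exact hx⟩
  obtain ⟨α, rfl⟩ := hcls_surj a
  have hmem : hcls α ∈ ι.range ⊔ τ.range := by
    apply cls_mem_sup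
    · intro f hf
      refine (le_sup_left : ι.range ≤ _) ⟨hcls ⟨⟨fun t => ⟨f t, hf t⟩, ?_⟩, ?_⟩, ?_⟩
      · exact (continuous_subtype_val.comp f.1.continuous).subtype_mk _
      · intro t ht
        have h0 := congrArg Subtype.val (f.2 t ht)
        exact Subtype.ext h0
      · change hcls (glMap _ _ _) = _
        congr 1
    · intro f hf
      refine (le_sup_right : τ.range ≤ _) ⟨hcls ⟨⟨fun t => ⟨f t, hf t⟩, ?_⟩, ?_⟩, ?_⟩
      · exact (continuous_subtype_val.comp f.1.continuous).subtype_mk _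
      · intro t ht
        have h0 := congrArg Subtype.val (f.2 t ht)
        exact Subtype.ext h0
      · change hcls (glMap _ _ _) = _
        congr 1
  rw [← SetLike.mem_coe, Subgroup.mul_normal, Set.mem_mul] at hmem
  obtain ⟨_, ⟨s, rfl⟩, _, ⟨b, rfl⟩, hab⟩ := hmem
  refine ⟨b, ?_⟩
  have h1 : ρ (hcls α) = 1 := ha
  rw [← hab, map_mul, hρι, hρτ, mul_one] at h1
  rw [← hab, h1, map_one, one_mul]

end PartD

/-! ### Part E: infinite concatenation and injectivity -/

section PartE

open Filter

/-- Finite concatenations of homotopies. -/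
def catP {T E : Type*} (F : ℕ → I × T → E) : ℕ → ℝ × T → E
  | 0, z => F 0 (Set.projIcc 0 1 zero_le_one z.1, z.2)
  | n+1, z => if z.1 ≤ (n : ℝ) + 1 then catP F n z else
      F (n+1) (Set.projIcc 0 1 zero_le_one (z.1 - ((n : ℝ) + 1)), z.2)

lemma catP_ge {T E : Type*} (F : ℕ → I × T → E) (hcomp : ∀ k t, F k (1, t) = F (k+1) (0, t))
    (n : ℕ) : ∀ (x : ℝ) (t : T), (n : ℝ) ≤ x →
      catP F n (x, t) = F n (Set.projIcc 0 1 zero_le_one (x - n), t) := by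
  induction n with
  | zero => intro x t hx; simp [catP]
  | succ n ih =>
    intro x t hx
    push_cast at hx ⊢
    simp only [catP]
    split_ifs with h
    · have hx' : x = n + 1 := le_antisymm h hx
      subst hx'
      rw [ih _ _ (by linarith)]
      have h1 : Set.projIcc (0 : ℝ) 1 zero_le_one ((n : ℝ) + 1 - n) = 1 :=
        Set.projIcc_of_right_le _ (by linarith)
      have h2 : Set.projIcc (0 : ℝ) 1 zero_le_one ((n : ℝ) + 1 - (n + 1)) = 0 :=
        Set.projIcc_of_le_left _ (by linarith)
      rw [h1, h2, hcomp]
    · rfl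

lemma catP_le {T E : Type*} (F : ℕ → I × T → E) (k n : ℕ) (hkn : k ≤ n) (x : ℝ) (t : T)
    (hx : x ≤ (k : ℝ) + 1) : catP F n (x, t) = catP F k (x, t) := by
  induction n, hkn using Nat.le_induction with
  | base => rfl
  | succ n hn ih =>
    have : (k : ℝ) ≤ n := by exact_mod_cast hn
    simp only [catP]
    rw [if_pos (by linarith), ih]

lemma continuous_catP {T E : Type*} [TopologicalSpace T] [TopologicalSpace E]
    (F : ℕ → I × T → E) (hF : ∀ k, Continuous (F k))
    (hcomp : ∀ k t, F k (1, t) = F (k+1) (0, t)) (n : ℕ) : Continuous (catP F n) := by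
  induction n with
  | zero =>
    have : catP F 0 = fun z => F 0 (Set.projIcc 0 1 zero_le_one z.1, z.2) := by
      funext z; simp [catP]
    rw [this]
    exact (hF 0).comp ((continuous_projIcc.comp continuous_fst).prodMk continuous_snd)
  | succ n ih =>
    have : catP F (n+1) = fun z => if z.1 ≤ (n : ℝ) + 1 then catP F n z else
      F (n+1) (Set.projIcc 0 1 zero_le_one (z.1 - ((n : ℝ) + 1)), z.2) := by
      funext z; simp [catP]
    rw [this]
    refine Continuous.if_le ih ?_ continuous_fst continuous_const ?_
    · exact (hF (n+1)).comp
        ((continuous_projIcc.comp (continuous_fst.sub continuous_const)).prodMk continuous_snd)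
    · rintro ⟨x, t⟩ hx
      simp only at hx ⊢
      rw [catP_ge F hcomp n x t (by linarith), hx]
      have h1 : Set.projIcc (0 : ℝ) 1 zero_le_one ((n : ℝ) + 1 - n) = 1 :=
        Set.projIcc_of_right_le _ (by linarith)
      have h2 : Set.projIcc (0 : ℝ) 1 zero_le_one ((n : ℝ) + 1 - (n + 1)) = 0 :=
        Set.projIcc_of_le_left _ (by linarith)
      rw [h1, h2, hcomp]

lemma exists_concat {T E : Type*} [TopologicalSpace T] [NormedAddCommGroup E]
    (F : ℕ → I × T → E) (hF : ∀ k, Continuous (F k))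
    (hcomp : ∀ k t, F k (1, t) = F (k+1) (0, t))
    (hnorm : ∀ k z, ‖F k z‖ ≤ 2 / ((k : ℝ) + 1)) :
    ∃ K : I × T → E, Continuous K ∧ (∀ t, K (0, t) = F 0 (0, t)) ∧ (∀ t, K (1, t) = 0) ∧
      ∀ s t, K (s, t) = 0 ∨ ∃ k u, K (s, t) = F k (u, t) := by
  classical
  let G : ℝ × T → E := fun z => catP F ⌊z.1⌋₊ z
  have hGn : ∀ n : ℕ, ∀ x t, x < (n : ℝ) + 1 → G (x, t) = catP F n (x, t) := by
    intro n x t hx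
    refine (catP_le F _ _ ?_ x t (Nat.lt_floor_add_one x).le).symm
    have : ⌊x⌋₊ < n + 1 := by
      rw [Nat.floor_lt' (by omega)]; push_cast; exact hx
    omega
  have hGc : Continuous G := by
    rw [continuous_iff_continuousAt]
    rintro ⟨x, t⟩
    refine (continuous_catP F hF hcomp ⌊x⌋₊).continuousAt.congr ?_
    have : ∀ᶠ z : ℝ × T in 𝓝 (x, t), z.1 < (⌊x⌋₊ : ℝ) + 1 :=
      continuous_fst.continuousAt.eventually_lt continuousAt_const (Nat.lt_floor_add_one x)
    filter_upwards [this] with z hz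
    exact (hGn _ z.1 z.2 hz).symm
  have hGF : ∀ x t, 0 ≤ x → G (x, t) = F ⌊x⌋₊ (Set.projIcc 0 1 zero_le_one (x - ⌊x⌋₊), t) :=
    fun x t hx => catP_ge F hcomp _ x t (Nat.floor_le hx)
  let K : I × T → E := fun z => if (z.1 : ℝ) < 1 then G ((z.1 : ℝ) / (1 - z.1), z.2) else 0
  have hK : ∀ s t, K (s, t) = 0 ∨ ∃ k u, K (s, t) = F k (u, t) ∧ 1 ≤ ((k : ℝ) + 1) * 2 * (1 - s) := by
    intro s t
    by_cases hs : (s : ℝ) < 1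
    · right
      have h0 : (0 : ℝ) ≤ s := s.2.1
      have h1 : (0 : ℝ) < 1 - s := by linarith
      have hx : (0 : ℝ) ≤ s / (1 - s) := by positivity
      refine ⟨⌊(s : ℝ) / (1 - s)⌋₊, _, (if_pos hs).trans (hGF _ t hx), ?_⟩
      have h2 := Nat.lt_floor_add_one ((s : ℝ) / (1 - s))
      rw [div_lt_iff₀ h1] at h2
      have h3 : (0 : ℝ) ≤ ⌊(s : ℝ) / (1 - s)⌋₊ := by positivity
      nlinarith
    · left; exact if_neg hs
  have hKn : ∀ s t, ‖K (s, t)‖ ≤ 4 * (1 - s) := by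
    intro s t
    have hs1 : (s : ℝ) ≤ 1 := s.2.2
    rcases hK s t with h | ⟨k, u, h, hk⟩
    · rw [h, norm_zero]; linarith
    · rw [h]
      refine (hnorm k _).trans ?_
      rw [div_le_iff₀ (by positivity)]
      nlinarith
  refine ⟨K, ?_, ?_, ?_, ?_⟩
  · rw [continuous_iff_continuousAt]
    rintro ⟨s, t⟩
    by_cases hs : (s : ℝ) < 1
    · have h1 : ContinuousAt (fun z : I × T => G ((z.1 : ℝ) / (1 - z.1), z.2)) (s, t) := by
        refine hGc.continuousAt.comp' (ContinuousAt.prodMk ?_ continuousAt_snd)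
        refine ContinuousAt.div₀ (by fun_prop) (by fun_prop) ?_
        simp only; linarith
      refine h1.congr ?_
      have : ∀ᶠ z : I × T in 𝓝 (s, t), (z.1 : ℝ) < 1 :=
        (continuous_subtype_val.comp continuous_fst).continuousAt.eventually_lt
          continuousAt_const hs
      filter_upwards [this] with z hz
      exact (if_pos hz).symm
    · have hs1 : s = 1 := Subtype.ext (le_antisymm s.2.2 (not_lt.1 hs))
      subst hs1
      have h0 : K (1, t) = 0 := if_neg hs
      rw [ContinuousAt, h0]
      refine squeeze_zero_norm (a := fun z : I × T => 4 * (1 - (z.1 : ℝ))) (fun z => hKn z.1 z.2) ?_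
      have hc : Continuous (fun z : I × T => 4 * (1 - (z.1 : ℝ))) := by fun_prop
      have := hc.tendsto (1, t)
      simpa using this
  · intro t
    have h1 : K (0, t) = G (0, t) := by
      have : K (0, t) = G (((0 : I) : ℝ) / (1 - ((0 : I) : ℝ)), t) := if_pos (by simp)
      rw [this]; simp
    rw [h1, hGF 0 t le_rfl]
    simp
  · intro t
    exact if_neg (by simp)
  · intro s t
    rcases hK s t with h | ⟨k, u, h, _⟩
    · exact Or.inl h
    · exact Or.inr ⟨k, u, h⟩

/-- Abbreviation for the homotopy groups of tails. -/
abbrev PiT (m k : ℕ) := HomotopyGroup (Fin (m+2)) (tailH (m+2) k) (tpt (m+2) k)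

/-- Inclusion on homotopy groups. -/
def tauM (m : ℕ) {k l : ℕ} (h : k ≤ l) : PiT m l →* PiT m k :=
  hgMap (Fin (m+2)) (x := tpt (m+2) l) (tincl (m+2) h) (rfl : _ = tpt (m+2) k)

/-- Retraction on homotopy groups. -/
def rhoM (m k : ℕ) {j : ℕ} (h : 1 ≤ j) :
    PiT m k →* HomotopyGroup (Fin (m+2)) (hawSphere (m+2) j) (spt (m+2) j) :=
  hgMap (Fin (m+2)) (tretr (m+2) k h) (tretr_tpt _ _ _)

lemma rhoM_tauM (m : ℕ) {k l j : ℕ} (h : k ≤ l) (hj : 1 ≤ j) (a : PiT m l) :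
    rhoM m k hj (tauM m h a) = rhoM m l hj a := by
  obtain ⟨f, rfl⟩ := hcls_surj a
  rfl

lemma tauM_tauM (m : ℕ) {k l p : ℕ} (h : k ≤ l) (h' : l ≤ p) (a : PiT m p) :
    tauM m h (tauM m h' a) = tauM m (h.trans h') a := by
  obtain ⟨f, rfl⟩ := hcls_surj a
  rfl

lemma exists_lift' {m k : ℕ} (a : PiT m k) (ha : rhoM m k (by omega : 1 ≤ k+1) a = 1) :
    ∃ b, tauM m (Nat.le_succ k) b = a := exists_lift a ha

lemma exists_lift_to (m i : ℕ) (a : PiT m 0)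
    (ha : ∀ j (hj : 1 ≤ j), j ≤ i → rhoM m 0 hj a = 1) :
    ∃ b, tauM m (Nat.zero_le i) b = a := by
  induction i with
  | zero =>
    refine ⟨a, ?_⟩
    obtain ⟨f, rfl⟩ := hcls_surj a
    rfl
  | succ i ih =>
    obtain ⟨b, rfl⟩ := ih (fun j hj hji => ha j hj (by omega))
    obtain ⟨c, rfl⟩ := exists_lift' b (by
      rw [← rhoM_tauM m (Nat.zero_le i)]
      exact ha _ _ le_rfl)
    exact ⟨c, (tauM_tauM m _ _ c).symm⟩

lemma eq_one_of_rho (m : ℕ) (a : PiT m 0) (ha : ∀ j (hj : 1 ≤ j), rhoM m 0 hj a = 1) : a = 1 := by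
  have step : ∀ k (a : {a : PiT m k // ∀ j (hj : 1 ≤ j), rhoM m k hj a = 1}),
      ∃ b : {b : PiT m (k+1) // ∀ j (hj : 1 ≤ j), rhoM m (k+1) hj b = 1},
        tauM m (Nat.le_succ k) b.1 = a.1 := by
    rintro k ⟨a, ha⟩
    obtain ⟨b, rfl⟩ := exists_lift' a (ha _ _)
    refine ⟨⟨b, fun j hj => ?_⟩, rfl⟩
    rw [← rhoM_tauM m (Nat.le_succ k)]
    exact ha j hj
  choose nxt hnxt using step
  let A : ∀ k, {a : PiT m k // ∀ j (hj : 1 ≤ j), rhoM m k hj a = 1} :=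
    fun k => Nat.rec ⟨a, ha⟩ (fun k x => nxt k x) k
  have hA : ∀ k, tauM m (Nat.le_succ k) (A (k+1)).1 = (A k).1 := fun k => hnxt k (A k)
  choose α hα using fun k => hcls_surj (A k).1
  have hom : ∀ k, ∃ F : I × (I^(Fin (m+2))) → tailH (m+2) k, Continuous F ∧
      (∀ t, F (0, t) = α k t) ∧
      (∀ t, (F (1, t) : EuclideanSpace ℝ (Fin (m+2+1))) = α (k+1) t) ∧
      (∀ s, ∀ t ∈ Cube.boundary (Fin (m+2)), F (s, t) = tpt (m+2) k) := by
    intro k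
    have h : hcls (α k) = hcls (glMap (x := tpt (m+2) (k+1)) (tincl (m+2) (Nat.le_succ k))
        (rfl : _ = tpt (m+2) k) (α (k+1))) := by
      rw [hα, ← hA]
      exact congrArg (tauM m (Nat.le_succ k)) (hα (k+1)).symm
    obtain ⟨F, hF, h0, h1, hb⟩ := exists_of_hcls_eq h
    exact ⟨F, hF, h0, fun t => by rw [h1]; rfl, hb⟩
  choose F hF h0 h1 hb using hom
  obtain ⟨K, hKc, hK0, hK1, hK⟩ := exists_concat
    (fun k z => (F k z : EuclideanSpace ℝ (Fin (m+2+1))))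
    (fun k => continuous_subtype_val.comp (hF k)) (fun k t => by rw [h1, h0])
    (fun k z => norm_le_of_mem_tailH (F k z).2)
  have hKm : ∀ z, K z ∈ tailH (m+2) 0 := by
    rintro ⟨s, t⟩
    rcases hK s t with h | ⟨k, u, h⟩
    · rw [h]; exact zero_mem_tailH _ _
    · rw [h]; exact tailH_anti (Nat.zero_le k) (F k (u, t)).2
  have hfin : hcls (α 0) = hcls GenLoop.const := by
    refine hcls_eq_of (fun z => ⟨K z, hKm z⟩) (hKc.subtype_mk _) ?_ ?_ ?_
    · intro t
      exact Subtype.ext ((hK0 t).trans (congrArg Subtype.val (h0 0 t)))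
    · intro t
      exact Subtype.ext (hK1 t)
    · intro s t ht
      apply Subtype.ext
      change K (s, t) = 0
      rcases hK s t with h | ⟨k, u, h⟩
      · exact h
      · rw [h, hb k u t ht]; rfl
  have : hcls (α 0) = a := hα 0
  rw [← this, hfin, hcls_const]

end PartE

/-! ### Part F: topology -/

section PartF

open Filter GenLoop

lemma hcls_eq_of_close {d j : ℕ} (hj : 1 ≤ j) {N : Type*}
    (f g : Ω^ N (hawSphere d j) (spt d j))
    (h : ∀ t, dist (f t) (g t) < 1 / (j : ℝ)) : hcls f = hcls g := by
  have hj' : (0 : ℝ) < j := by exact_mod_cast hj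
  let c : EuclideanSpace ℝ (Fin (d+1)) := EuclideanSpace.single (0 : Fin (d+1)) ((1 : ℝ)/j)
  have hc : ‖c‖ = 1 / j := by simp [c]
  have hmem : ∀ x : EuclideanSpace ℝ (Fin (d+1)), x ∈ hawSphere d j ↔ ‖x - c‖ = 1 / j := by
    intro x
    unfold hawSphere
    rw [mem_sphere_iff_norm]
  let w : I × (I^N) → EuclideanSpace ℝ (Fin (d+1)) := fun z =>
    ((f z.2 : EuclideanSpace ℝ (Fin (d+1))) - c) +
      (z.1 : ℝ) • ((g z.2 : EuclideanSpace ℝ (Fin (d+1))) - f z.2)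
  have hfc : Continuous (fun t => (f t : EuclideanSpace ℝ (Fin (d+1)))) :=
    continuous_subtype_val.comp f.1.continuous
  have hgc : Continuous (fun t => (g t : EuclideanSpace ℝ (Fin (d+1)))) :=
    continuous_subtype_val.comp g.1.continuous
  have hwc : Continuous w := by
    have h1 := hfc.comp (continuous_snd (X := I) (Y := I^N))
    have h2 := hgc.comp (continuous_snd (X := I) (Y := I^N))
    have h3 : Continuous (fun z : I × (I^N) => (z.1 : ℝ)) := by fun_prop
    exact (h1.sub continuous_const).add (h3.smul (h2.sub h1))
  have hw0 : ∀ z, ‖w z‖ ≠ 0 := by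
    rintro ⟨s, t⟩ h0
    have h1 : ‖(f t : EuclideanSpace ℝ (Fin (d+1))) - c‖ = 1 / j := (hmem _).1 (f t).2
    have h2 := h t
    rw [Subtype.dist_eq, dist_comm, dist_eq_norm] at h2
    rw [norm_eq_zero] at h0
    have h3 : (f t : EuclideanSpace ℝ (Fin (d+1))) - c =
      -((s : ℝ) • ((g t : EuclideanSpace ℝ (Fin (d+1))) - f t)) := eq_neg_of_add_eq_zero_left h0
    rw [h3, norm_neg, norm_smul, Real.norm_eq_abs, abs_of_nonneg s.2.1] at h1
    have := norm_nonneg ((g t : EuclideanSpace ℝ (Fin (d+1))) - f t)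
    have hs : (s : ℝ) ≤ 1 := s.2.2
    nlinarith
  let F : I × (I^N) → EuclideanSpace ℝ (Fin (d+1)) := fun z => c + (1 / (j : ℝ) / ‖w z‖) • w z
  have hFc : Continuous F :=
    continuous_const.add ((continuous_const.div hwc.norm hw0).smul hwc)
  have hFm : ∀ z, F z ∈ hawSphere d j := by
    intro z
    rw [hmem]
    simp only [F, add_sub_cancel_left]
    rw [norm_smul, Real.norm_eq_abs, abs_of_nonneg (by positivity), div_mul_cancel₀ _ (hw0 z)]
  have hFof : ∀ z (x : EuclideanSpace ℝ (Fin (d+1))), x ∈ hawSphere d j → w z = x - c →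
      F z = x := by
    intro z x hx hz
    simp only [F]
    rw [hz, (hmem x).1 hx, div_self (by positivity), one_smul, add_sub_cancel]
  refine hcls_eq_of (fun z => ⟨F z, hFm z⟩) (hFc.subtype_mk _) ?_ ?_ ?_
  · intro t
    exact Subtype.ext (hFof _ _ (f t).2 (by simp [w]))
  · intro t
    exact Subtype.ext (hFof _ _ (g t).2 (by simp [w]))
  · intro s t ht
    have h1 : f t = spt d j := f.2 t ht
    have h2 : g t = spt d j := g.2 t ht
    exact Subtype.ext (hFof _ _ (spt d j).2 (by simp [w, h1, h2]))

lemma discrete_sphere {d j : ℕ} (hj : 1 ≤ j) {N : Type*} :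
    DiscreteTopology (HomotopyGroup N (hawSphere d j) (spt d j)) := by
  have hj' : (0 : ℝ) < j := by exact_mod_cast hj
  rw [discreteTopology_iff_isOpen_singleton]
  intro a
  rw [← isQuotientMap_hcls.isOpen_preimage, isOpen_iff_mem_nhds]
  intro f hf
  have hev : ∀ᶠ g : Ω^ N (hawSphere d j) (spt d j) in 𝓝 f,
      ∀ t, dist (g t) (f t) < 1 / (j : ℝ) := by
    have hb : {φ : C(I^N, hawSphere d j) | ∀ t, dist (φ t) (f t) < 1 / (j : ℝ)} ∈ 𝓝 f.1 := by
      have := ContinuousMap.tendsto_iff_tendstoUniformly.1 (tendsto_id (x := 𝓝 f.1))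
      rw [Metric.tendstoUniformly_iff] at this
      filter_upwards [this (1 / (j : ℝ)) (by positivity)] with φ hφ t
      rw [dist_comm]; exact hφ t
    exact continuous_subtype_val.continuousAt.eventually hb
  filter_upwards [hev] with g hg
  have : hcls g = hcls f := hcls_eq_of_close hj g f hg
  change hcls g = a
  rw [this]; exact hf

/-- The comparison map. -/
def thetaM (m : ℕ) (a : PiT m 0) :
    ∀ j : ℕ, HomotopyGroup (Fin (m+2)) (hawSphere (m+2) (j+1)) (spt (m+2) (j+1)) :=
  fun j => rhoM m 0 (Nat.succ_le_succ (Nat.zero_le j)) a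

lemma continuous_thetaM (m : ℕ) : Continuous (thetaM m) :=
  continuous_pi fun _ => continuous_hgFun _ _

lemma thetaM_inj (m : ℕ) : Function.Injective (thetaM m) := by
  intro a b hab
  have h : a⁻¹ * b = 1 := by
    apply eq_one_of_rho
    intro j hj
    obtain ⟨i, rfl⟩ : ∃ i, j = i + 1 := ⟨j - 1, by omega⟩
    have := congrFun hab i
    have h' : rhoM m 0 hj a = rhoM m 0 hj b := this
    rw [map_mul, map_inv, h', inv_mul_cancel]
  exact (inv_mul_eq_one.1 h)

lemma exists_tail_mem (m : ℕ) (U : Set (PiT m 0)) (hU : IsOpen U) (a : PiT m 0) (ha : a ∈ U) :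
    ∃ i, ∀ b : PiT m i, a * tauM m (Nat.zero_le i) b ∈ U := by
  obtain ⟨f, rfl⟩ := hcls_surj a
  have hU' : IsOpen (hcls ⁻¹' U : Set (Ω^ (Fin (m+2)) (tailH (m+2) 0) (tpt (m+2) 0))) :=
    hU.preimage continuous_hcls
  let f₀ := transAt (0 : Fin (m+2)) GenLoop.const f
  have hf₀ : f₀ ∈ (hcls ⁻¹' U : Set (Ω^ (Fin (m+2)) (tailH (m+2) 0) (tpt (m+2) 0))) := by
    change hcls f₀ ∈ U
    rw [← hcls_mul, hcls_const, mul_one]; exact ha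
  obtain ⟨ε, hε, hball⟩ := Metric.isOpen_iff.1 hU' f₀ hf₀
  obtain ⟨i, hi⟩ := exists_nat_one_div_lt (half_pos hε)
  refine ⟨i, fun b => ?_⟩
  obtain ⟨h, rfl⟩ := hcls_surj b
  let h' : Ω^ (Fin (m+2)) (tailH (m+2) 0) (tpt (m+2) 0) :=
    glMap (x := tpt (m+2) i) (tincl (m+2) (Nat.zero_le i)) (rfl : _ = tpt (m+2) 0) h
  have h1 : tauM m (Nat.zero_le i) (hcls h) = hcls h' := rfl
  rw [h1, hcls_mul (0 : Fin (m+2))]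
  apply hball
  have hh : ∀ t, dist (h' t) (tpt (m+2) 0) < ε := by
    intro t
    have h2 := norm_le_of_mem_tailH (h t).2
    rw [Subtype.dist_eq]
    change dist (h t : EuclideanSpace ℝ (Fin (m+2+1))) 0 < ε
    rw [dist_zero_right]
    refine h2.trans_lt ?_
    have : 2 / ((i : ℝ) + 1) = 2 * (1 / ((i : ℝ) + 1)) := by ring
    rw [this]; linarith
  rw [Metric.mem_ball]
  change dist (transAt (0 : Fin (m+2)) h' f).1 f₀.1 < ε
  rw [ContinuousMap.dist_lt_iff hε]
  intro t
  change dist (transAt (0 : Fin (m+2)) h' f t) (transAt (0 : Fin (m+2)) GenLoop.const f t) < ε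
  simp only [transAt, coe_copy]
  split_ifs
  · exact hh _
  · rw [dist_self]; exact hε

lemma thetaM_embedding (m : ℕ) : Topology.IsEmbedding (thetaM m) := by
  have hd : ∀ j : ℕ, DiscreteTopology
      (HomotopyGroup (Fin (m+2)) (hawSphere (m+2) (j+1)) (spt (m+2) (j+1))) :=
    fun j => discrete_sphere (by omega)
  refine ⟨?_, thetaM_inj m⟩
  rw [Topology.isInducing_iff_nhds]
  intro a
  refine le_antisymm ((continuous_thetaM m).tendsto a).le_comap ?_
  intro U hU
  obtain ⟨U', hU'U, hU', haU'⟩ := mem_nhds_iff.1 hU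
  obtain ⟨i, hi⟩ := exists_tail_mem m U' hU' a haU'
  have hev : ∀ᶠ b in 𝓝 (thetaM m a), ∀ j ∈ Finset.range i, b j = thetaM m a j := by
    rw [Filter.eventually_all_finset]
    intro j _
    exact (continuous_apply j).continuousAt.eventually
      ((isOpen_discrete {thetaM m a j}).mem_nhds rfl)
  refine Filter.mem_comap.2 ⟨_, hev, ?_⟩
  intro g hg
  apply hU'U
  obtain ⟨b, hb⟩ := exists_lift_to m i (a⁻¹ * g) (by
    intro j hj hji
    obtain ⟨p, rfl⟩ : ∃ p, j = p + 1 := ⟨j - 1, by omega⟩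
    have h' : rhoM m 0 hj g = rhoM m 0 hj a := hg p (Finset.mem_range.2 (by omega))
    rw [map_mul, map_inv, h', inv_mul_cancel])
  have := hi b
  rwa [hb, mul_inv_cancel_left] at this

lemma metrizable_tail (m : ℕ) : TopologicalSpace.MetrizableSpace (PiT m 0) := by
  have hd : ∀ j : ℕ, DiscreteTopology
      (HomotopyGroup (Fin (m+2)) (hawSphere (m+2) (j+1)) (spt (m+2) (j+1))) :=
    fun j => discrete_sphere (by omega)
  have hm : ∀ j : ℕ, TopologicalSpace.MetrizableSpace
      (HomotopyGroup (Fin (m+2)) (hawSphere (m+2) (j+1)) (spt (m+2) (j+1))) :=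
    fun j => inferInstance
  exact (thetaM_embedding m).metrizableSpace

end PartF

/-- For `n = m+2 ≥ 2`, the topological `n`-th homotopy group of the `n`-dimensional
Hawaiian earring is metrizable. -/
theorem piTop_hawaiian_metrizable (m : ℕ) :
    TopologicalSpace.MetrizableSpace
      (HomotopyGroup (Fin (m+2)) (hawaiian (m+2)) (hawaiianPt (m+2))) := by
  exact metrizable_tail m
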